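/- Let n ≥ 1, 1 ≤ p < ∞, and 0 < α < n. If f ∈ S_{p,α}(ℝ^n) and there exist c > 0 and σ > 0 such that η_{p,α}f(r) ≤ c r^{σ/p} for every r > 0, then f belongs to the weak Morrey space wL^{p, n − α + σ}(ℝ^n). -/

import Mathlib

/-!
On `B(x, r)` the kernel satisfies `|x - y|^{-(n-α)} ≥ r^{-(n-α)}` for `y ≠ x`, because `n - α > 0`.
Restricting the Stummel integral centred at `x` to the superlevel set `{|f| > t}` (a Chebyshev
argument) gives `r^{-(n-α)} t^p |{y ∈ B(x,r) : |f y| > t}| ≤ (η_{p,α} f(r))^p`. Taking `p`-th roots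
and multiplying by `r^{-σ/p}` bounds the weak Morrey norm by `c`.
-/

open MeasureTheory Metric Filter Set ENNReal

noncomputable section

/-- Euclidean space ℝ^n. -/
abbrev Euc (n : ℕ) := EuclideanSpace ℝ (Fin n)

/-- Stummel p-modulus with general weight Ψ:
`η_{p,Ψ}f(r) = sup_x ( ∫_{|x-y|<r} |f(y)|^p Ψ(|x-y|)/|x-y|^n dy )^{1/p}`. -/
noncomputable def stummelMod (n : ℕ) (p : ℝ) (Ψ : ℝ → ℝ) (f : Euc n → ℝ) (r : ℝ) : ℝ≥0∞ :=
  ⨆ x : Euc n,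
    (∫⁻ y in ball x r,
        ENNReal.ofReal (|f y| ^ p * Ψ (dist x y) / dist x y ^ (n : ℝ))) ^ (1 / p)

/-- Stummel p-modulus with power weight Ψ(t) = t^α:
`η_{p,α}f(r) = sup_x ( ∫_{|x-y|<r} |f(y)|^p / |x-y|^{n-α} dy )^{1/p}`. -/
noncomputable def stummelModA (n : ℕ) (p α : ℝ) (f : Euc n → ℝ) (r : ℝ) : ℝ≥0∞ :=
  ⨆ x : Euc n,
    (∫⁻ y in ball x r,
        ENNReal.ofReal (|f y| ^ p / dist x y ^ ((n : ℝ) - α))) ^ (1 / p)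

/-- f ∈ L^p_loc(ℝ^n). -/
def MemLocLp (n : ℕ) (p : ℝ) (f : Euc n → ℝ) : Prop :=
  LocallyIntegrable (fun y => |f y| ^ p) volume

/-- The generalized Stummel p-class `S_{p,Ψ}`. -/
def MemStummel (n : ℕ) (p : ℝ) (Ψ : ℝ → ℝ) (f : Euc n → ℝ) : Prop :=
  MemLocLp n p f ∧ (∀ r > 0, stummelMod n p Ψ f r < ⊤) ∧
    Tendsto (stummelMod n p Ψ f) (nhdsWithin 0 (Ioi 0)) (nhds 0)

/-- The Stummel p-class `S_{p,α}` (power weight). -/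
def MemStummelA (n : ℕ) (p α : ℝ) (f : Euc n → ℝ) : Prop :=
  MemLocLp n p f ∧ (∀ r > 0, stummelModA n p α f r < ⊤) ∧
    Tendsto (stummelModA n p α f) (nhdsWithin 0 (Ioi 0)) (nhds 0)

/-- The bounded Stummel modulus class `S̃_{p,α}`. -/
def MemStummelBddA (n : ℕ) (p α : ℝ) (f : Euc n → ℝ) : Prop :=
  MemLocLp n p f ∧ ∀ r > 0, stummelModA n p α f r < ⊤

/-- Generalized Morrey norm `‖f‖_{L^{p,Ψ}}`. -/
noncomputable def morreyNorm (n : ℕ) (p : ℝ) (Ψ : ℝ → ℝ) (f : Euc n → ℝ) : ℝ≥0∞ :=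
  ⨆ (x : Euc n) (r : ℝ) (_ : 0 < r),
    (volume (ball x r))⁻¹ ^ (1 / p) * ENNReal.ofReal (Ψ r)⁻¹ *
      (∫⁻ y in ball x r, ENNReal.ofReal (|f y| ^ p)) ^ (1 / p)

/-- The generalized Morrey space `L^{p,Ψ}`. -/
def MemMorrey (n : ℕ) (p : ℝ) (Ψ : ℝ → ℝ) (f : Euc n → ℝ) : Prop :=
  MemLocLp n p f ∧ morreyNorm n p Ψ f < ⊤

/-- Classical Morrey norm `‖f‖_{L^{p,λ}}`. -/
noncomputable def morreyNormC (n : ℕ) (p lam : ℝ) (f : Euc n → ℝ) : ℝ≥0∞ :=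
  ⨆ (x : Euc n) (r : ℝ) (_ : 0 < r),
    ENNReal.ofReal (r ^ (-(lam / p))) *
      (∫⁻ y in ball x r, ENNReal.ofReal (|f y| ^ p)) ^ (1 / p)

/-- The classical Morrey space `L^{p,λ}`. -/
def MemMorreyC (n : ℕ) (p lam : ℝ) (f : Euc n → ℝ) : Prop :=
  MemLocLp n p f ∧ morreyNormC n p lam f < ⊤

/-- Generalized weak Morrey norm `‖f‖_{wL^{p,Ψ}}`. -/
noncomputable def weakMorreyNorm (n : ℕ) (p : ℝ) (Ψ : ℝ → ℝ) (f : Euc n → ℝ) : ℝ≥0∞ :=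
  ⨆ (x : Euc n) (r : ℝ) (_ : 0 < r) (t : ℝ) (_ : 0 < t),
    ENNReal.ofReal t * (volume {y ∈ ball x r | t < |f y|}) ^ (1 / p) /
      (ENNReal.ofReal (Ψ r) * (volume (ball x r)) ^ (1 / p))

/-- The generalized weak Morrey space `wL^{p,Ψ}`. -/
def MemWeakMorrey (n : ℕ) (p : ℝ) (Ψ : ℝ → ℝ) (f : Euc n → ℝ) : Prop :=
  Measurable f ∧ weakMorreyNorm n p Ψ f < ⊤

/-- Classical weak Morrey norm `‖f‖_{wL^{p,λ}}`. -/
noncomputable def weakMorreyNormC (n : ℕ) (p lam : ℝ) (f : Euc n → ℝ) : ℝ≥0∞ :=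
  ⨆ (x : Euc n) (r : ℝ) (_ : 0 < r) (t : ℝ) (_ : 0 < t),
    ENNReal.ofReal (r ^ (-(lam / p))) * ENNReal.ofReal t *
      (volume {y ∈ ball x r | t < |f y|}) ^ (1 / p)

/-- The classical weak Morrey space `wL^{p,λ}`. -/
def MemWeakMorreyC (n : ℕ) (p lam : ℝ) (f : Euc n → ℝ) : Prop :=
  Measurable f ∧ weakMorreyNormC n p lam f < ⊤

/-- Decreasing rearrangement `f*(t) = inf{σ > 0 : |{|f| > σ}| ≤ t}`. -/
noncomputable def rearrangement (n : ℕ) (f : Euc n → ℝ) (t : ℝ) : ℝ :=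
  sInf {σ : ℝ | 0 < σ ∧ volume {x : Euc n | σ < |f x|} ≤ ENNReal.ofReal t}

/-- Lorentz norm `‖f‖_{L^p_κ} = ( ∫₀^∞ (t^{1/κ} f*(t))^p dt/t )^{1/p}`. -/
noncomputable def lorentzNorm (n : ℕ) (kappa p : ℝ) (f : Euc n → ℝ) : ℝ≥0∞ :=
  (∫⁻ t in Ioi (0 : ℝ),
      ENNReal.ofReal ((t ^ (1 / kappa) * rearrangement n f t) ^ p / t)) ^ (1 / p)

/-- The Lorentz space `L^p_κ`. -/
def MemLorentz (n : ℕ) (kappa p : ℝ) (f : Euc n → ℝ) : Prop :=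
  Measurable f ∧ lorentzNorm n kappa p f < ⊤

end

/-- Chebyshev's inequality for the Stummel integral, with the kernel bounded below by its value at
distance `r`. -/
lemma chebyshev_stummel (n : ℕ) (hn : 1 ≤ n) (p α : ℝ) (hp : 1 ≤ p) (hαn : α < n)
    (f : Euc n → ℝ) (hmeas : Measurable f) (x : Euc n) (r t : ℝ) (ht : 0 < t) :
    ENNReal.ofReal (t ^ p / r ^ ((n : ℝ) - α)) * volume {y ∈ ball x r | t < |f y|} ≤
      ∫⁻ y in ball x r, ENNReal.ofReal (|f y| ^ p / dist x y ^ ((n : ℝ) - α)) := by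
  have hms : MeasurableSet {y ∈ ball x r | t < |f y|} :=
    measurableSet_ball.inter (measurableSet_lt measurable_const hmeas.abs)
  have : Nonempty (Fin n) := ⟨⟨0, hn⟩⟩
  have : Nontrivial (Euc n) := inferInstance
  rw [← setLIntegral_const]
  refine le_trans ?_ (lintegral_mono_set (μ := volume)
    (show {y ∈ ball x r | t < |f y|} ⊆ ball x r from fun y hy => hy.1))
  -- At `y = x` the Lean kernel takes the junk value `0`, so the centre is discarded as a null set.
  have hne : ∀ᵐ y ∂(volume : Measure (Euc n)), y ≠ x := by
    simp [ae_iff]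
  refine setLIntegral_mono_ae' hms ?_
  filter_upwards [hne] with y hyx hy
  have hd : 0 < dist x y := dist_pos.2 hyx.symm
  have hdr : dist x y ≤ r := by rw [dist_comm]; exact (mem_ball.1 hy.1).le
  refine ENNReal.ofReal_le_ofReal (div_le_div₀ (by positivity) ?_ (by positivity) ?_)
  · exact Real.rpow_le_rpow ht.le hy.2.le (by linarith)
  · exact Real.rpow_le_rpow hd.le hdr (by linarith)

/-- If `f ∈ S_{p,α}(ℝ^n)` and `η_{p,α}f(r) ≤ c r^{σ/p}` for every `r > 0`
with `c, σ > 0`, then `f ∈ wL^{p, n − α + σ}(ℝ^n)`. -/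
theorem stummel_subset_weak_morrey_classical (n : ℕ) (hn : 1 ≤ n) (p α : ℝ)
    (hp : 1 ≤ p) (hα : 0 < α) (hαn : α < n)
    (f : Euc n → ℝ) (hmeas : Measurable f) (hf : MemStummelA n p α f)
    (c σ : ℝ) (hc : 0 < c) (hσ : 0 < σ)
    (hbound : ∀ r > 0, stummelModA n p α f r ≤ ENNReal.ofReal (c * r ^ (σ / p))) :
    MemWeakMorreyC n p ((n : ℝ) - α + σ) f := by
  refine ⟨hmeas, lt_of_le_of_lt ?_ (ENNReal.ofReal_lt_top (r := c))⟩
  refine iSup_le fun x => iSup_le fun r => iSup_le fun hr => iSup_le fun t => iSup_le fun ht => ?_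
  have hp0 : 0 < p := by linarith
  have h1p : 0 ≤ 1 / p := by positivity
  have key : (ENNReal.ofReal (t ^ p / r ^ ((n : ℝ) - α)) *
      volume {y ∈ ball x r | t < |f y|}) ^ (1 / p) ≤ ENNReal.ofReal (c * r ^ (σ / p)) :=
    (ENNReal.rpow_le_rpow (chebyshev_stummel n hn p α hp hαn f hmeas x r t ht) h1p).trans
      ((le_iSup (fun x : Euc n => (∫⁻ y in ball x r,
        ENNReal.ofReal (|f y| ^ p / dist x y ^ ((n : ℝ) - α))) ^ (1 / p)) x).trans
        (hbound r hr))
  rw [ENNReal.mul_rpow_of_nonneg _ _ h1p, ENNReal.ofReal_rpow_of_nonneg (by positivity) h1p] at key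
  have e1 : (t ^ p / r ^ ((n : ℝ) - α)) ^ (1 / p) = t * r ^ (-(((n : ℝ) - α) / p)) := by
    rw [Real.div_rpow (by positivity) (by positivity), ← Real.rpow_mul ht.le,
      ← Real.rpow_mul hr.le, mul_one_div_cancel hp0.ne', Real.rpow_one, Real.rpow_neg hr.le,
      mul_one_div, div_eq_mul_inv]
  have e2 : r ^ (-(((n : ℝ) - α + σ) / p)) =
      r ^ (-(σ / p)) * r ^ (-(((n : ℝ) - α) / p)) := by
    rw [← Real.rpow_add hr]; congr 1; ring
  rw [e1] at key
  calc _ = ENNReal.ofReal (r ^ (-(σ / p))) * (ENNReal.ofReal (t * r ^ (-(((n : ℝ) - α) / p))) *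
        volume {y ∈ ball x r | t < |f y|} ^ (1 / p)) := by
        rw [e2, ENNReal.ofReal_mul (by positivity), ENNReal.ofReal_mul ht.le]; ring
    _ ≤ ENNReal.ofReal (r ^ (-(σ / p))) * ENNReal.ofReal (c * r ^ (σ / p)) := by gcongr
    _ = ENNReal.ofReal c := by
        rw [← ENNReal.ofReal_mul (by positivity), mul_left_comm, ← Real.rpow_add hr]
        simp
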